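/- arXiv:0710.5272 — 4 statements merged into one kernel-verified Lean document; each statement's English description precedes it below -/
import Mathlib

section
/- For every integer m ≥ 3, the matrices T_m and T̃_m are mutually inverse: T_m T̃_m = I_m and T̃_m T_m = I_m. -/
open Real Matrix

/-- Entry `(Q_m)_{s,t} = √(2/(m+1)) · sin(s t π/(m+1))` of the DST-I matrix,
for 1-based indices `s, t`. -/
noncomputable def dstIent (m s t : ℕ) : ℝ :=
  Real.sqrt (2 / ((m : ℝ) + 1)) *
    Real.sin ((s : ℝ) * (t : ℝ) * Real.pi / ((m : ℝ) + 1))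

/-- Entry `p_j = 1 − j/(m−1)` of the vector `p ∈ ℝ^{m−2}` (1-based `j = 1,…,m−2`). -/
noncomputable def pv (m j : ℕ) : ℝ := 1 - (j : ℝ) / ((m : ℝ) - 1)

/-- The normalizing factor `α_m = √(1 + ‖p‖₂²)`. -/
noncomputable def alphaAR (m : ℕ) : ℝ :=
  Real.sqrt (1 + ∑ j ∈ Finset.Icc 1 (m - 2), (pv m j) ^ 2)

/-- The anti-reflective transform `T_m`: first column `(α_m⁻¹, α_m⁻¹ p, 0)ᵀ`, last
column `(0, α_m⁻¹ J p, α_m⁻¹)ᵀ`, and columns `2,…,m−1` vanishing in rows `1` and `m`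
and forming `Q_{m−2}` on rows `2,…,m−1`. -/
noncomputable def arT (m : ℕ) : Matrix (Fin m) (Fin m) ℝ := fun s t =>
  if t.val = 0 then
    (if s.val = 0 then (alphaAR m)⁻¹
     else if s.val = m - 1 then 0
     else (alphaAR m)⁻¹ * pv m s.val)
  else if t.val = m - 1 then
    (if s.val = 0 then 0
     else if s.val = m - 1 then (alphaAR m)⁻¹
     else (alphaAR m)⁻¹ * pv m (m - 1 - s.val))
  else
    (if s.val = 0 ∨ s.val = m - 1 then 0 else dstIent (m - 2) s.val t.val)

/-- The matrix `T̃_m`: first column `(α_m, −Q_{m−2} p, 0)ᵀ`, last column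
`(0, −Q_{m−2} J p, α_m)ᵀ`, and columns `2,…,m−1` vanishing in rows `1` and `m`
and forming `Q_{m−2}` on rows `2,…,m−1`. -/
noncomputable def arTtil (m : ℕ) : Matrix (Fin m) (Fin m) ℝ := fun s t =>
  if t.val = 0 then
    (if s.val = 0 then alphaAR m
     else if s.val = m - 1 then 0
     else -∑ j ∈ Finset.Icc 1 (m - 2), dstIent (m - 2) s.val j * pv m j)
  else if t.val = m - 1 then
    (if s.val = 0 then 0
     else if s.val = m - 1 then alphaAR m
     else -∑ j ∈ Finset.Icc 1 (m - 2), dstIent (m - 2) s.val j * pv m (m - 1 - j))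
  else
    (if s.val = 0 ∨ s.val = m - 1 then 0 else dstIent (m - 2) s.val t.val)

theorem aux_tele (θ : ℝ) (N : ℕ) :
    2 * Real.sin (θ / 2) * ∑ j ∈ Finset.range N, Real.cos ((j : ℝ) * θ) =
      Real.sin ((N : ℝ) * θ - θ / 2) + Real.sin (θ / 2) := by
  induction N with
  | zero => simp [Real.sin_neg]
  | succ k ih =>
    rw [Finset.sum_range_succ, mul_add, ih]
    have h1 : ((k + 1 : ℕ) : ℝ) * θ - θ / 2 = k * θ + θ / 2 := by push_cast; ring
    rw [h1, Real.sin_add, Real.sin_sub]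
    ring

theorem aux_cos (N : ℕ) (k : ℤ) (hN : 0 < N) (h0 : k ≠ 0) (h1 : -(2 * (N : ℤ)) < k)
    (h2 : k < 2 * (N : ℤ)) :
    ∑ j ∈ Finset.range N, Real.cos ((j : ℝ) * ((k : ℝ) * π / N)) = (1 - (-1) ^ k) / 2 := by
  have hN' : (0 : ℝ) < N := by exact_mod_cast hN
  have h := aux_tele ((k : ℝ) * π / N) N
  have e : (N : ℝ) * ((k : ℝ) * π / N) = k * π := by field_simp
  rw [e, Real.sin_int_mul_pi_sub] at h
  have h1' : -(2 * (N : ℝ)) < k := by exact_mod_cast h1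
  have h2' : (k : ℝ) < 2 * N := by exact_mod_cast h2
  have hs : Real.sin ((k : ℝ) * π / N / 2) ≠ 0 := by
    have hp := Real.pi_pos
    rw [Ne, Real.sin_eq_zero_iff_of_lt_of_lt]
    · have : (k : ℝ) ≠ 0 := by exact_mod_cast h0
      positivity
    · rw [div_div, lt_div_iff₀ (by positivity)]; nlinarith
    · rw [div_div, div_lt_iff₀ (by positivity)]; nlinarith
  apply mul_left_cancel₀ (mul_ne_zero two_ne_zero hs)
  rw [h]; ring

theorem aux_orth (n s t : ℕ) (hs : 1 ≤ s) (hs' : s ≤ n) (ht : 1 ≤ t) (ht' : t ≤ n) :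
    ∑ j ∈ Finset.Icc 1 n, dstIent n s j * dstIent n j t = if s = t then 1 else 0 := by
  have e0 : ∑ j ∈ Finset.Icc 1 n, dstIent n s j * dstIent n j t
      = ∑ j ∈ Finset.range (n + 1), dstIent n s j * dstIent n j t := by
    rw [Finset.range_eq_Ico, Finset.sum_eq_sum_Ico_succ_bot (by omega)]
    simp [dstIent]
    rfl
  have hn : (0 : ℝ) < (n : ℝ) + 1 := by positivity
  have hq : Real.sqrt (2 / ((n : ℝ) + 1)) * Real.sqrt (2 / ((n : ℝ) + 1)) = 2 / ((n : ℝ) + 1) :=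
    Real.mul_self_sqrt (by positivity)
  have e1 : ∀ j : ℕ, dstIent n s j * dstIent n j t = (1 / ((n : ℝ) + 1)) *
      (Real.cos ((j : ℝ) * ((((s : ℤ) - t : ℤ) : ℝ) * π / (n + 1 : ℕ)))
        - Real.cos ((j : ℝ) * ((((s : ℤ) + t : ℤ) : ℝ) * π / (n + 1 : ℕ)))) := by
    intro j
    have a1 : (j : ℝ) * ((((s : ℤ) - t : ℤ) : ℝ) * π / (n + 1 : ℕ)) =
      (s : ℝ) * j * π / (n + 1) - (j : ℝ) * t * π / (n + 1) := by push_cast; ring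
    have a2 : (j : ℝ) * ((((s : ℤ) + t : ℤ) : ℝ) * π / (n + 1 : ℕ)) =
      (s : ℝ) * j * π / (n + 1) + (j : ℝ) * t * π / (n + 1) := by push_cast; ring
    rw [a1, a2, Real.cos_sub, Real.cos_add]
    unfold dstIent
    linear_combination (Real.sin ((s : ℝ) * j * π / (n + 1)) *
      Real.sin ((j : ℝ) * t * π / (n + 1))) * hq
  rw [e0, Finset.sum_congr rfl (fun j _ => e1 j), ← Finset.mul_sum, Finset.sum_sub_distrib,
    aux_cos (n + 1) ((s : ℤ) + t) (by omega) (by omega) (by omega) (by omega)]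
  split_ifs with h
  · subst h
    have : ((-1 : ℝ)) ^ ((s : ℤ) + s) = 1 := Even.neg_one_zpow ⟨_, rfl⟩
    rw [this]
    simp
    field_simp
  · rw [aux_cos (n + 1) ((s : ℤ) - t) (by omega) (by omega) (by omega) (by omega)]
    have : ((-1 : ℝ)) ^ ((s : ℤ) + t) = (-1) ^ ((s : ℤ) - t) := by
      have e : (s : ℤ) + t = (s - t) + (t + t) := by ring
      rw [e, zpow_add₀ (by norm_num), Even.neg_one_zpow ⟨(t : ℤ), rfl⟩, mul_one]
    rw [this]; ring

theorem aux_orth_vec (n s : ℕ) (hs : 1 ≤ s) (hs' : s ≤ n) (f : ℕ → ℝ) :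
    ∑ j ∈ Finset.Icc 1 n, dstIent n s j * ∑ i ∈ Finset.Icc 1 n, dstIent n j i * f i = f s := by
  simp_rw [Finset.mul_sum, ← mul_assoc]
  rw [Finset.sum_comm]
  simp_rw [← Finset.sum_mul]
  rw [Finset.sum_eq_single s]
  · rw [aux_orth n s s hs hs' hs hs']; simp
  · intro b hb hbs
    rw [Finset.mem_Icc] at hb
    rw [aux_orth n s b hs hs' hb.1 hb.2, if_neg (Ne.symm hbs), zero_mul]
  · intro h; exact absurd (Finset.mem_Icc.2 ⟨hs, hs'⟩) h

theorem aux_sum (n : ℕ) (f : ℕ → ℝ) :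
    ∑ i : Fin (n + 2), f i.val = f 0 + ∑ j ∈ Finset.Icc 1 n, f j + f (n + 1) := by
  rw [Fin.sum_univ_eq_sum_range, Finset.sum_range_succ, Finset.range_eq_Ico,
    Finset.sum_eq_sum_Ico_succ_bot (by omega)]
  rfl

/-- Natural-number indexed entries. -/
noncomputable def auxT (m s t : ℕ) : ℝ :=
  if t = 0 then
    (if s = 0 then (alphaAR m)⁻¹
     else if s = m - 1 then 0
     else (alphaAR m)⁻¹ * pv m s)
  else if t = m - 1 then
    (if s = 0 then 0
     else if s = m - 1 then (alphaAR m)⁻¹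
     else (alphaAR m)⁻¹ * pv m (m - 1 - s))
  else
    (if s = 0 ∨ s = m - 1 then 0 else dstIent (m - 2) s t)

noncomputable def auxU (m s t : ℕ) : ℝ :=
  if t = 0 then
    (if s = 0 then alphaAR m
     else if s = m - 1 then 0
     else -∑ j ∈ Finset.Icc 1 (m - 2), dstIent (m - 2) s j * pv m j)
  else if t = m - 1 then
    (if s = 0 then 0
     else if s = m - 1 then alphaAR m
     else -∑ j ∈ Finset.Icc 1 (m - 2), dstIent (m - 2) s j * pv m (m - 1 - j))
  else
    (if s = 0 ∨ s = m - 1 then 0 else dstIent (m - 2) s t)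

theorem aux_main (n s t : ℕ) (hs : s < n + 2) (ht : t < n + 2) :
    auxT (n + 2) s 0 * auxU (n + 2) 0 t
      + ∑ j ∈ Finset.Icc 1 n, auxT (n + 2) s j * auxU (n + 2) j t
      + auxT (n + 2) s (n + 1) * auxU (n + 2) (n + 1) t = if s = t then 1 else 0 := by
  have ha : alphaAR (n + 2) ≠ 0 := by
    unfold alphaAR
    exact (Real.sqrt_pos.2 (by positivity)).ne'
  have e1 : n + 2 - 1 = n + 1 := rfl
  have e2 : n + 2 - 2 = n := rfl
  have hT : ∀ j ∈ Finset.Icc 1 n, auxT (n + 2) s j =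
      if s = 0 ∨ s = n + 1 then 0 else dstIent n s j := by
    intro j hj
    rw [Finset.mem_Icc] at hj
    unfold auxT
    rw [if_neg (by omega), if_neg (by omega)]; rfl
  have hU : ∀ j ∈ Finset.Icc 1 n, auxU (n + 2) j t =
      if t = 0 then -∑ i ∈ Finset.Icc 1 n, dstIent n j i * pv (n + 2) i
      else if t = n + 1 then -∑ i ∈ Finset.Icc 1 n, dstIent n j i * pv (n + 2) (n + 1 - i)
      else dstIent n j t := by
    intro j hj
    rw [Finset.mem_Icc] at hj
    unfold auxU
    have a : j ≠ 0 := by omega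
    have b : j ≠ n + 1 := by omega
    simp [e1, e2, a, b]
  rw [Finset.sum_congr rfl (fun j hj => by rw [hT j hj, hU j hj])]
  by_cases s0 : s = 0
  · subst s0
    by_cases t0 : t = 0
    · subst t0; simp [auxT, auxU, ha]
    · by_cases t1 : t = n + 1
      · subst t1; simp [auxT, auxU]
      · simp [auxT, auxU, t0, t1, Ne.symm t0]
  by_cases s1 : s = n + 1
  · subst s1
    by_cases t0 : t = 0
    · subst t0; simp [auxT, auxU]
    · by_cases t1 : t = n + 1
      · subst t1; simp [auxT, auxU, ha]
      · simp [auxT, auxU, t0, t1, Ne.symm t1]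
  have v := aux_orth_vec n s (by omega) (by omega)
  by_cases t0 : t = 0
  · subst t0
    have v1 := v (fun i => pv (n + 2) i)
    simp [auxT, auxU, s0, s1, v1]
    field_simp
    ring
  by_cases t1 : t = n + 1
  · subst t1
    have v1 := v (fun i => pv (n + 2) (n + 1 - i))
    simp [auxT, auxU, s0, s1, v1]
    field_simp
    ring
  have o := aux_orth n s t (by omega) (by omega) (by omega) (by omega)
  simp [auxT, auxU, s0, s1, t0, t1, o]

/-- For every integer `m ≥ 3`, the matrices `T_m` and `T̃_m` are mutually inverse:
`T_m T̃_m = I_m` and `T̃_m T_m = I_m`. -/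
theorem arT_mul_arTtil (m : ℕ) (hm : 3 ≤ m) :
    arT m * arTtil m = 1 ∧ arTtil m * arT m = 1 := by
  have h : arT m * arTtil m = 1 := by
    obtain ⟨n, rfl⟩ : ∃ n, m = n + 2 := ⟨m - 2, by omega⟩
    ext s t
    rw [Matrix.mul_apply, Matrix.one_apply]
    have := aux_main n s.val t.val s.isLt t.isLt
    rw [← aux_sum n (fun j => auxT (n + 2) s.val j * auxU (n + 2) j t.val)] at this
    simp only [Fin.ext_iff]
    exact this
  exact ⟨h, mul_eq_one_comm.mp h⟩
end

section
/- Let m ≥ 3 and let h_0,…,h_q be a symmetric one-dimensional mask with q ≤ m−3. Then the one-dimensional anti-reflective matrix AR_m(h) is diagonalized by T_m: T̃_m AR_m(h) T_m = D, where D is the diagonal matrix with entries D_{1,1} = f(0), D_{s,s} = f((s−1)π/(m−1)) for s = 2,…,m−1, and D_{m,m} = f(0). In particular, the first and last columns of T_m are eigenvectors of AR_m(h) with eigenvalue f(0), and the s-th column (2 ≤ s ≤ m−1) is an eigenvector with eigenvalue f((s−1)π/(m−1)). -/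
open Real Matrix

/-- Generating function `f(x) = h_0 + 2 ∑_{k=1}^{q} h_k cos(kx)`. -/
noncomputable def genFun (h : ℕ → ℝ) (q : ℕ) (x : ℝ) : ℝ :=
  h 0 + 2 * ∑ k ∈ Finset.Icc 1 q, h k * Real.cos ((k : ℝ) * x)

/-- First-column entries of the 1D anti-reflective matrix, at 1-based row index `s`:
`h_{s−1} + 2∑_{t=s}^{q} h_t` for `1 ≤ s ≤ q+1` and `0` otherwise (so row `1` gets
`h_0 + 2∑_{t=1}^{q} h_t`, row `q+1` gets `h_q`). -/
noncomputable def arCol (h : ℕ → ℝ) (q s : ℕ) : ℝ :=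
  if 1 ≤ s ∧ s ≤ q + 1 then h (s - 1) + 2 * ∑ t ∈ Finset.Icc s q, h t else 0

/-- The 1D anti-reflective blurring matrix `AR_m(h)`: its first column is `arCol`,
its last column is the flip of the first, rows `1` and `m` vanish outside the corner
entries, and its central `(m−2)×(m−2)` submatrix is `τ_{m−2}(h)` with entries
`h_{|s−t|} − h_{s+t} − h_{2(m−1)−s−t}` (1-based `s,t = 1,…,m−2`). -/
noncomputable def arMat (h : ℕ → ℝ) (q m : ℕ) : Matrix (Fin m) (Fin m) ℝ := fun s t =>
  if t.val = 0 then arCol h q (s.val + 1)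
  else if t.val = m - 1 then arCol h q (m - s.val)
  else if s.val = 0 ∨ s.val = m - 1 then 0
  else h ((s.val : ℤ) - (t.val : ℤ)).natAbs - h (s.val + t.val) -
    h (2 * (m - 1) - s.val - t.val)

lemma ar_sum_split (N : ℕ) (F : ℕ → ℝ) :
    ∑ i : Fin (N + 2), F i.val = F 0 + ∑ j ∈ Finset.Icc 1 N, F j + F (N + 1) := by
  rw [Fin.sum_univ_eq_sum_range F (N + 2), Finset.sum_range_succ, Finset.sum_range_succ',
    Finset.range_eq_Ico, Finset.sum_Ico_add' F 0 N 1]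
  have : Finset.Ico (0 + 1) (N + 1) = Finset.Icc 1 N := by
    ext x; simp only [Finset.mem_Ico, Finset.mem_Icc]; omega
  rw [this]; ring

lemma ar_sum_ind (N : ℕ) (g : ℤ → ℝ) (c : ℤ) :
    ∑ t ∈ Finset.Icc 1 N, (if (t : ℤ) = c then (1 : ℝ) else 0) * g t =
      if 1 ≤ c ∧ c ≤ N then g c else 0 := by
  split_ifs with hc
  · obtain ⟨d, rfl⟩ := Int.eq_ofNat_of_zero_le (by omega : 0 ≤ c)
    rw [Finset.sum_eq_single d]
    · simp
    · intro b _ hb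
      have : ¬ ((b : ℤ) = d) := by omega
      simp [this]
    · intro hd
      simp only [Finset.mem_Icc] at hd
      omega
  · apply Finset.sum_eq_zero
    intro t ht
    simp only [Finset.mem_Icc] at ht
    have : ¬ ((t : ℤ) = c) := by omega
    simp [this]

lemma ar_delta (N s k : ℕ) (hs1 : 1 ≤ s) (hs : s ≤ N) (hk : k ≤ N) (g : ℤ → ℝ)
    (h0 : ∀ c, g (-c) = 2 * g 0 - g c)
    (hn : ∀ c, g (N + 1 + c) = 2 * g (N + 1) - g (N + 1 - c)) :
    ((if k + 1 = s + 1 then (1 : ℝ) else 0) + 2 * (if s + 1 ≤ k then 1 else 0)) * g 0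
    + ∑ t ∈ Finset.Icc 1 N, ((if ((s : ℤ) - (t : ℤ)).natAbs = k then (1 : ℝ) else 0)
        - (if s + t = k then 1 else 0) - (if 2 * (N + 1) - s - t = k then 1 else 0)) * g t
    + ((if k + 1 = N + 2 - s then (1 : ℝ) else 0) + 2 * (if N + 2 - s ≤ k then 1 else 0))
        * g (N + 1)
    = if k = 0 then g s else g (s - k) + g (s + k) := by
  have key : ∑ t ∈ Finset.Icc 1 N, ((if ((s : ℤ) - (t : ℤ)).natAbs = k then (1 : ℝ) else 0)
        - (if s + t = k then 1 else 0) - (if 2 * (N + 1) - s - t = k then 1 else 0)) * g t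
      = (if 1 ≤ (s : ℤ) - k ∧ (s : ℤ) - k ≤ N then g (s - k) else 0)
      + (if k = 0 then 0 else if 1 ≤ (s : ℤ) + k ∧ (s : ℤ) + k ≤ N then g (s + k) else 0)
      - (if 1 ≤ (k : ℤ) - s ∧ (k : ℤ) - s ≤ N then g (k - s) else 0)
      - (if 1 ≤ 2 * ((N : ℤ) + 1) - s - k ∧ 2 * ((N : ℤ) + 1) - s - k ≤ N
          then g (2 * ((N : ℤ) + 1) - s - k) else 0) := by
    rw [← ar_sum_ind, ← ar_sum_ind, ← ar_sum_ind, ← ar_sum_ind]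
    by_cases hk0 : k = 0
    · rw [if_pos hk0, add_zero, ← Finset.sum_sub_distrib, ← Finset.sum_sub_distrib]
      apply Finset.sum_congr rfl
      intro t ht
      simp only [Finset.mem_Icc] at ht
      rw [← sub_mul, ← sub_mul]
      congr 1
      congr 1
      · congr 1
        · apply if_congr _ rfl rfl; omega
        · apply if_congr _ rfl rfl; omega
      · apply if_congr _ rfl rfl; omega
    · rw [if_neg hk0, ← Finset.sum_add_distrib, ← Finset.sum_sub_distrib,
        ← Finset.sum_sub_distrib]
      apply Finset.sum_congr rfl
      intro t ht
      simp only [Finset.mem_Icc] at ht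
      rw [← add_mul, ← sub_mul, ← sub_mul]
      congr 1
      congr 1
      · congr 1
        · by_cases h1 : (t : ℤ) = s - k
          · rw [if_pos h1, if_neg (show ¬ (t : ℤ) = s + k by omega), if_pos (by omega)]; simp
          · by_cases h2 : (t : ℤ) = s + k
            · rw [if_neg h1, if_pos h2, if_pos (by omega)]; simp
            · rw [if_neg h1, if_neg h2, if_neg (by omega)]; simp
        · apply if_congr _ rfl rfl; omega
      · apply if_congr _ rfl rfl; omega
  rw [key]
  by_cases hk0 : k = 0
  · subst hk0
    rw [if_neg (by omega), if_neg (by omega), if_pos (by omega), if_pos rfl, if_neg (by omega),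
      if_neg (by omega), if_neg (by omega), if_neg (by omega), if_pos rfl]
    simp
  · simp only [if_neg hk0]
    have L : ((if k + 1 = s + 1 then (1 : ℝ) else 0) + 2 * (if s + 1 ≤ k then 1 else 0)) * g 0
        + (if 1 ≤ (s : ℤ) - k ∧ (s : ℤ) - k ≤ N then g (s - k) else 0)
        - (if 1 ≤ (k : ℤ) - s ∧ (k : ℤ) - s ≤ N then g (k - s) else 0) = g (s - k) := by
      rcases lt_trichotomy s k with hsk | hsk | hsk
      · rw [if_neg (by omega), if_pos (by omega), if_neg (by omega), if_pos (by omega)]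
        have := h0 ((k : ℤ) - s)
        rw [neg_sub] at this
        rw [this]; ring
      · subst hsk
        simp
      · rw [if_neg (by omega), if_neg (by omega), if_pos (by omega), if_neg (by omega)]
        ring
    have R : ((if k + 1 = N + 2 - s then (1 : ℝ) else 0)
          + 2 * (if N + 2 - s ≤ k then 1 else 0)) * g (N + 1)
        + (if 1 ≤ (s : ℤ) + k ∧ (s : ℤ) + k ≤ N then g (s + k) else 0)
        - (if 1 ≤ 2 * ((N : ℤ) + 1) - s - k ∧ 2 * ((N : ℤ) + 1) - s - k ≤ N
          then g (2 * ((N : ℤ) + 1) - s - k) else 0) = g (s + k) := by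
      rcases lt_trichotomy (s + k) (N + 1) with hsk | hsk | hsk
      · rw [if_neg (by omega), if_neg (by omega), if_pos (by omega), if_neg (by omega)]
        ring
      · rw [if_pos (by omega), if_neg (by omega), if_neg (by omega), if_neg (by omega)]
        have : (s : ℤ) + k = N + 1 := by omega
        rw [this]; ring
      · rw [if_neg (by omega), if_pos (by omega), if_neg (by omega), if_pos (by omega)]
        have := hn ((s : ℤ) + k - (N + 1))
        rw [show (N : ℤ) + 1 + (s + k - (N + 1)) = s + k by ring,
          show (N : ℤ) + 1 - (s + k - (N + 1)) = 2 * ((N : ℤ) + 1) - s - k by ring] at this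
        rw [this]; ring
    linarith

lemma ar_h_expand (h : ℕ → ℝ) (q : ℕ) (hsupp : ∀ k, q < k → h k = 0) (j : ℕ) :
    h j = ∑ k ∈ Finset.range (q + 1), h k * (if j = k then (1 : ℝ) else 0) := by
  simp only [mul_ite, mul_one, mul_zero, Finset.sum_ite_eq, Finset.mem_range]
  split_ifs with hj
  · rfl
  · exact hsupp j (by omega)

lemma ar_col_expand (h : ℕ → ℝ) (q : ℕ) (s : ℕ) (hs : 1 ≤ s) :
    arCol h q s = ∑ k ∈ Finset.range (q + 1),
      h k * ((if k + 1 = s then (1 : ℝ) else 0) + 2 * (if s ≤ k then 1 else 0)) := by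
  have e2 : ∑ k ∈ Finset.range (q + 1), h k * (2 * (if s ≤ k then (1 : ℝ) else 0)) =
      2 * ∑ t ∈ Finset.Icc s q, h t := by
    rw [Finset.mul_sum, ← Finset.sum_subset (s₁ := Finset.Icc s q)]
    · apply Finset.sum_congr rfl
      intro t ht
      simp only [Finset.mem_Icc] at ht
      rw [if_pos ht.1]; ring
    · intro t ht
      simp only [Finset.mem_Icc, Finset.mem_range] at *
      omega
    · intro t ht ht2
      simp only [Finset.mem_Icc, Finset.mem_range] at *
      rw [if_neg (by omega)]; ring
  simp only [mul_add, Finset.sum_add_distrib]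
  rw [e2]
  unfold arCol
  obtain ⟨r, rfl⟩ : ∃ r, s = r + 1 := ⟨s - 1, by omega⟩
  by_cases hr : r ≤ q
  · rw [if_pos ⟨hs, by omega⟩]
    congr 1
    simp [Finset.sum_ite_eq']
    intro hh; omega
  · rw [if_neg (by omega), Finset.Icc_eq_empty (by omega), Finset.sum_eq_zero]
    · simp
    · intro x hx
      simp only [Finset.mem_range] at hx
      rw [if_neg (by omega)]; simp

lemma ar_row (N q : ℕ) (hq : q ≤ N) (h : ℕ → ℝ) (hsupp : ∀ k, q < k → h k = 0)
    (s : ℕ) (hs1 : 1 ≤ s) (hs : s ≤ N) (g : ℤ → ℝ)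
    (h0 : ∀ c, g (-c) = 2 * g 0 - g c)
    (hn : ∀ c, g (N + 1 + c) = 2 * g (N + 1) - g (N + 1 - c)) :
    arCol h q (s + 1) * g 0
    + ∑ t ∈ Finset.Icc 1 N, (h ((s : ℤ) - (t : ℤ)).natAbs - h (s + t)
        - h (2 * (N + 1) - s - t)) * g t
    + arCol h q (N + 2 - s) * g (N + 1)
    = h 0 * g s + ∑ k ∈ Finset.Icc 1 q, h k * (g (s - k) + g (s + k)) := by
  have e : ∑ t ∈ Finset.Icc 1 N, (h ((s : ℤ) - (t : ℤ)).natAbs - h (s + t)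
        - h (2 * (N + 1) - s - t)) * g t =
      ∑ k ∈ Finset.range (q + 1), h k * ∑ t ∈ Finset.Icc 1 N,
        ((if ((s : ℤ) - (t : ℤ)).natAbs = k then (1 : ℝ) else 0)
        - (if s + t = k then 1 else 0) - (if 2 * (N + 1) - s - t = k then 1 else 0)) * g t := by
    simp only [Finset.mul_sum]
    rw [Finset.sum_comm]
    apply Finset.sum_congr rfl
    intro t _
    rw [ar_h_expand h q hsupp (((s : ℤ) - (t : ℤ)).natAbs), ar_h_expand h q hsupp (s + t),
      ar_h_expand h q hsupp (2 * (N + 1) - s - t), ← Finset.sum_sub_distrib,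
      ← Finset.sum_sub_distrib, Finset.sum_mul]
    apply Finset.sum_congr rfl
    intro k _
    ring
  rw [e, ar_col_expand h q _ (by omega), ar_col_expand h q _ (by omega), Finset.sum_mul,
    Finset.sum_mul, ← Finset.sum_add_distrib, ← Finset.sum_add_distrib]
  have e3 : ∀ k ∈ Finset.range (q + 1), _ = h k * (if k = 0 then g s else g (s - k) + g (s + k)) :=
    fun k hk => congrArg (h k * ·)
      (ar_delta N s k hs1 hs (by simp only [Finset.mem_range] at hk; omega) g h0 hn)
  have e4 : ∑ k ∈ Finset.range (q + 1), h k * (if k = 0 then g s else g (s - k) + g (s + k))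
      = h 0 * g s + ∑ k ∈ Finset.Icc 1 q, h k * (g (s - k) + g (s + k)) := by
    rw [Finset.sum_range_succ', Finset.range_eq_Ico,
      Finset.sum_Ico_add' (fun k : ℕ => h k * (if k = 0 then g s else g (s - k) + g (s + k))) 0 q 1]
    have : Finset.Ico (0 + 1) (q + 1) = Finset.Icc 1 q := by
      ext x; simp only [Finset.mem_Ico, Finset.mem_Icc]; omega
    rw [this, add_comm, if_pos rfl]
    congr 1
    apply Finset.sum_congr rfl
    intro k hk
    simp only [Finset.mem_Icc] at hk
    rw [if_neg (by omega)]
  rw [← e4, ← Finset.sum_congr rfl e3]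
  apply Finset.sum_congr rfl
  intro k _
  ring

/-- Action of `AR` on a grid function that is anti-symmetric about both end points. -/
lemma ar_eig (N q : ℕ) (hq : q + 1 ≤ N) (h : ℕ → ℝ) (hsupp : ∀ k, q < k → h k = 0)
    (g : ℤ → ℝ) (x : ℝ)
    (h0 : ∀ c, g (-c) = 2 * g 0 - g c)
    (hn : ∀ c, g (N + 1 + c) = 2 * g (N + 1) - g (N + 1 - c))
    (hx : ∀ s k : ℤ, g (s - k) + g (s + k) = 2 * Real.cos (k * x) * g s)
    (hend0 : x = 0 ∨ g 0 = 0) (hendn : x = 0 ∨ g (N + 1) = 0) (s : Fin (N + 2)) :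
    ∑ t : Fin (N + 2), arMat h q (N + 2) s t * g t.val = g s.val * genFun h q x := by
  have hc1 : arCol h q 1 = genFun h q 0 := by
    unfold arCol genFun
    rw [if_pos (by omega)]; simp
  have hc2 : arCol h q (N + 2) = 0 := by
    unfold arCol
    rw [if_neg (by omega)]
  have e := ar_sum_split N (fun t =>
    (if t = 0 then arCol h q (s.val + 1)
      else if t = N + 1 then arCol h q (N + 2 - s.val)
      else if s.val = 0 ∨ s.val = N + 1 then 0
      else h ((s.val : ℤ) - (t : ℤ)).natAbs - h (s.val + t) -
        h (2 * (N + 1) - s.val - t)) * g t)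
  refine Eq.trans e ?_
  have e2 : ∀ t ∈ Finset.Icc 1 N, (if t = 0 then arCol h q (s.val + 1)
      else if t = N + 1 then arCol h q (N + 2 - s.val)
      else if s.val = 0 ∨ s.val = N + 1 then 0
      else h ((s.val : ℤ) - (t : ℤ)).natAbs - h (s.val + t) -
        h (2 * (N + 1) - s.val - t)) * g t = (if s.val = 0 ∨ s.val = N + 1 then 0
      else h ((s.val : ℤ) - (t : ℤ)).natAbs - h (s.val + t) -
        h (2 * (N + 1) - s.val - t)) * g t := by
    intro t ht
    simp only [Finset.mem_Icc] at ht
    rw [if_neg (by omega), if_neg (by omega)]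
  rw [Finset.sum_congr rfl e2]
  obtain ⟨s, hs⟩ := s
  simp only
  rw [if_pos trivial, if_neg (by omega), if_pos trivial]
  by_cases hs0 : s = 0
  · subst hs0
    simp only [true_or, if_true, zero_mul, Finset.sum_const_zero, zero_add, Nat.sub_zero, hc1, hc2]
    rcases hend0 with hx0 | hg
    · subst hx0; simp; ring
    · simp [hg]
  by_cases hsn : s = N + 1
  · subst hsn
    rw [show N + 1 + 1 = N + 2 by ring, show N + 2 - (N + 1) = 1 by omega, hc1, hc2]
    simp only [or_true, if_true, zero_mul, Finset.sum_const_zero, zero_add]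
    rcases hendn with hx0 | hg
    · subst hx0; ring
    · push_cast; simp [hg]
  · simp only [hs0, hsn, or_self, if_false]
    have := ar_row N q (by omega) h hsupp s (by omega) (by omega) g h0 hn
    push_cast
    rw [this]
    unfold genFun
    rw [mul_add, mul_comm (h 0), Finset.mul_sum, Finset.mul_sum]
    congr 1
    apply Finset.sum_congr rfl
    intro k _
    have := hx s k
    push_cast at this
    rw [this]; ring

lemma ar_cos_sum (N c : ℕ) (h0 : 0 < c) (hc : c < 2 * (N + 1)) :
    ∑ j ∈ Finset.Icc 1 N, Real.cos (j * (c * π / (N + 1))) = (-(-1) ^ c - 1) / 2 := by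
  set x : ℝ := c * π / (N + 1) with hx
  have tele : ∀ M : ℕ, 2 * Real.sin (x / 2) * ∑ j ∈ Finset.Icc 1 M, Real.cos (j * x) =
      Real.sin (M * x + x / 2) - Real.sin (x / 2) := by
    intro M
    induction M with
    | zero => simp
    | succ M ih =>
      rw [Finset.sum_Icc_succ_top (by omega), mul_add, ih]
      have a1 : Real.sin (((M + 1 : ℕ) : ℝ) * x + x / 2) = _ := Real.sin_add _ _
      have a2 : Real.sin (((M + 1 : ℕ) : ℝ) * x - x / 2) = _ := Real.sin_sub _ _
      have a3 : ((M + 1 : ℕ) : ℝ) * x - x / 2 = M * x + x / 2 := by push_cast; ring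
      rw [a3] at a2
      rw [a1, a2]; ring
  have hN : (0 : ℝ) < N + 1 := by positivity
  have hcR : (0 : ℝ) < c := by exact_mod_cast h0
  have hcR2 : (c : ℝ) < 2 * (N + 1) := by exact_mod_cast hc
  have hpos : 0 < Real.sin (x / 2) := by
    apply Real.sin_pos_of_pos_of_lt_pi
    · have := Real.pi_pos; positivity
    · rw [hx, div_div, div_lt_iff₀ (by positivity)]
      nlinarith [Real.pi_pos]
  have hs := tele N
  have : (N : ℝ) * x + x / 2 = c * π - x / 2 := by
    rw [hx]; field_simp; ring
  rw [this, Real.sin_sub, Real.sin_nat_mul_pi, Real.cos_nat_mul_pi] at hs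
  have h3 : Real.sin (x / 2) * (2 * ∑ j ∈ Finset.Icc 1 N, Real.cos (j * x)) =
      Real.sin (x / 2) * (-(-1) ^ c - 1) := by
    linarith
  have := mul_left_cancel₀ hpos.ne' h3
  linarith

lemma ar_orth (N a b : ℕ) (ha : 1 ≤ a) (haN : a ≤ N) (hb : 1 ≤ b) (hbN : b ≤ N) :
    ∑ j ∈ Finset.Icc 1 N, dstIent N a j * dstIent N j b = if a = b then 1 else 0 := by
  have hN : (0 : ℝ) < N + 1 := by positivity
  have term : ∀ (a b j : ℕ), a ≤ b → dstIent N a j * dstIent N j b =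
      1 / (N + 1) * (Real.cos (j * ((b - a : ℕ) * π / (N + 1))) -
        Real.cos (j * ((a + b : ℕ) * π / (N + 1)))) := by
    intro a b j hab
    have h1 : (j : ℝ) * ((b - a : ℕ) * π / (N + 1)) =
      j * b * π / (N + 1) - a * j * π / (N + 1) := by push_cast [hab]; ring
    have h2 : (j : ℝ) * ((a + b : ℕ) * π / (N + 1)) =
      j * b * π / (N + 1) + a * j * π / (N + 1) := by push_cast; ring
    unfold dstIent
    rw [h1, h2, Real.cos_sub, Real.cos_add]
    have := Real.mul_self_sqrt (show (0 : ℝ) ≤ 2 / (N + 1) by positivity)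
    linear_combination
      Real.sin (a * j * π / (N + 1)) * Real.sin (j * b * π / (N + 1)) * this
  have symm : ∀ a b j : ℕ, dstIent N a j * dstIent N j b = dstIent N b j * dstIent N j a := by
    intro a b j
    unfold dstIent
    rw [mul_comm (a : ℝ) j, mul_comm (b : ℝ) j]; ring
  have main : ∀ a b : ℕ, 1 ≤ a → b ≤ N → a < b →
      ∑ j ∈ Finset.Icc 1 N, dstIent N a j * dstIent N j b = 0 := by
    intro a b ha hb hab
    rw [Finset.sum_congr rfl (fun j _ => term a b j hab.le), ← Finset.mul_sum,
      Finset.sum_sub_distrib, ar_cos_sum N (b - a) (by omega) (by omega),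
      ar_cos_sum N (a + b) (by omega) (by omega)]
    have : a + b = (b - a) + 2 * a := by omega
    rw [this, pow_add, pow_mul]
    norm_num
  rcases lt_trichotomy a b with hab | hab | hab
  · rw [main a b ha hbN hab, if_neg (by omega)]
  · subst hab
    rw [if_pos rfl, Finset.sum_congr rfl (fun j _ => term a a j le_rfl), ← Finset.mul_sum,
      Finset.sum_sub_distrib, ar_cos_sum N (a + a) (by omega) (by omega), ← two_mul, pow_mul]
    simp
    field_simp
    ring
  · rw [Finset.sum_congr rfl (fun j _ => symm a b j), main b a hb haN hab, if_neg (by omega)]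

lemma ar_alpha_pos (m : ℕ) : 0 < alphaAR m := by
  unfold alphaAR
  apply Real.sqrt_pos.mpr
  have : 0 ≤ ∑ j ∈ Finset.Icc 1 (m - 2), (pv m j) ^ 2 :=
    Finset.sum_nonneg (fun _ _ => sq_nonneg _)
  linarith

lemma ar_inv (N : ℕ) : arTtil (N + 2) * arT (N + 2) = 1 := by
  have hα := (ar_alpha_pos (N + 2)).ne'
  ext s t
  rw [Matrix.mul_apply, Matrix.one_apply]
  have hs := s.isLt
  have ht := t.isLt
  have e : ∑ j : Fin (N + 2), arTtil (N + 2) s j * arT (N + 2) j t =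
      arTtil (N + 2) s ⟨0, by omega⟩ * arT (N + 2) ⟨0, by omega⟩ t
      + ∑ j ∈ Finset.Icc 1 N,
        (if s.val = 0 ∨ s.val = N + 1 then 0 else dstIent N s.val j) *
        (if t.val = 0 then (alphaAR (N + 2))⁻¹ * pv (N + 2) j
          else if t.val = N + 1 then (alphaAR (N + 2))⁻¹ * pv (N + 2) (N + 1 - j)
          else dstIent N j t.val)
      + arTtil (N + 2) s ⟨N + 1, by omega⟩ * arT (N + 2) ⟨N + 1, by omega⟩ t := by
    have := ar_sum_split N (fun j => if hj : j < N + 2 then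
      arTtil (N + 2) s ⟨j, hj⟩ * arT (N + 2) ⟨j, hj⟩ t else 0)
    simp only [Fin.is_lt, dif_pos, Fin.eta] at this
    rw [this, dif_pos (by omega), dif_pos (by omega)]
    congr 2
    apply Finset.sum_congr rfl
    intro j hj
    simp only [Finset.mem_Icc] at hj
    have j0 : j ≠ 0 := by omega
    have jn : j ≠ N + 1 := by omega
    rw [dif_pos (by omega)]
    simp [arTtil, arT, j0, jn]
  rw [e]
  by_cases s0 : s.val = 0
  · by_cases t0 : t.val = 0
    · have : s = t := Fin.ext (by omega)
      simp [arTtil, arT, s0, t0, this, hα]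
    · have : s ≠ t := fun hh => t0 (by rw [← hh, s0])
      simp [arTtil, arT, s0, t0, this]
  by_cases sn : s.val = N + 1
  · by_cases tn : t.val = N + 1
    · have : s = t := Fin.ext (by omega)
      simp [arTtil, arT, tn, this, hα]
    · have : s ≠ t := fun hh => tn (by rw [← hh, sn])
      simp [arTtil, arT, sn, tn, this]
  by_cases t0 : t.val = 0
  · have : s ≠ t := fun hh => s0 (by rw [hh, t0])
    simp [arTtil, arT, s0, sn, t0, this, Finset.sum_mul]
    rw [neg_add_eq_zero]
    apply Finset.sum_congr rfl
    intro j _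
    ring
  by_cases tn : t.val = N + 1
  · have : s ≠ t := fun hh => sn (by rw [hh, tn])
    simp [arTtil, arT, s0, sn, tn, this, Finset.sum_mul]
    rw [← sub_eq_add_neg, sub_eq_zero]
    apply Finset.sum_congr rfl
    intro j _
    ring
  · have := ar_orth N s.val t.val (by omega) (by omega) (by omega) (by omega)
    simp [arTtil, arT, s0, sn, t0, tn, this, Fin.ext_iff]

lemma ar_comm (N q : ℕ) (hq : q + 1 ≤ N) (h : ℕ → ℝ) (hsupp : ∀ k, q < k → h k = 0) :
    arMat h q (N + 2) * arT (N + 2) =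
      arT (N + 2) *
        Matrix.diagonal (fun s : Fin (N + 2) =>
          if s.val = N + 2 - 1 then genFun h q 0
          else genFun h q ((s.val : ℝ) * Real.pi / (((N + 2 : ℕ) : ℝ) - 1))) := by
  have hN : (N : ℝ) + 1 ≠ 0 := by positivity
  have hN2 : (N : ℝ) + 2 - 1 ≠ 0 := by rw [show (N : ℝ) + 2 - 1 = N + 1 by ring]; exact hN
  ext s t
  rw [Matrix.mul_diagonal, Matrix.mul_apply]
  have ht := t.isLt
  have hs := s.isLt
  by_cases t0 : t.val = 0
  · have hg : ∀ r : Fin (N + 2), arT (N + 2) r t =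
        (fun c : ℤ => (alphaAR (N + 2))⁻¹ * (1 - (c : ℝ) / (N + 1))) r.val := by
      intro r
      have hr := r.isLt
      by_cases r0 : r.val = 0
      · simp [arT, t0, r0]
      by_cases rn : r.val = N + 1
      · simp [arT, t0, rn, hN]
      · simp [arT, t0, r0, rn, pv]
        left; ring
    simp only [hg]
    rw [if_neg (by omega), t0]
    simp only [Nat.cast_zero, zero_mul, zero_div]
    apply ar_eig N q hq h hsupp (fun c : ℤ => (alphaAR (N + 2))⁻¹ * (1 - (c : ℝ) / (N + 1))) 0
    · intro c; push_cast; ring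
    · intro c; push_cast; ring
    · intro s k; push_cast; simp; ring
    · exact Or.inl rfl
    · exact Or.inl rfl
  by_cases tn : t.val = N + 1
  · have hg : ∀ r : Fin (N + 2), arT (N + 2) r t =
        (fun c : ℤ => (alphaAR (N + 2))⁻¹ * ((c : ℝ) / (N + 1))) r.val := by
      intro r
      have hr := r.isLt
      by_cases r0 : r.val = 0
      · simp [arT, tn, r0]
      by_cases rn : r.val = N + 1
      · simp [arT, tn, rn, hN]
      · have h1 : ((N + 1 - r.val : ℕ) : ℝ) = N + 1 - r.val := by
          rw [Nat.cast_sub (by omega)]; push_cast; ring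
        simp [arT, tn, r0, rn, pv, h1]
        left; field_simp; ring
    simp only [hg]
    rw [if_pos (by omega)]
    apply ar_eig N q hq h hsupp (fun c : ℤ => (alphaAR (N + 2))⁻¹ * ((c : ℝ) / (N + 1))) 0
    · intro c; push_cast; ring
    · intro c; push_cast; ring
    · intro s k; push_cast; simp; ring
    · exact Or.inl rfl
    · exact Or.inl rfl
  · have hpi : ((N : ℝ) + 1) * t.val * π / (N + 1) = t.val * π := by field_simp
    have hg : ∀ r : Fin (N + 2), arT (N + 2) r t =
        (fun c : ℤ => Real.sqrt (2 / ((N : ℝ) + 1)) *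
          Real.sin (c * (t.val * π / (N + 1)))) r.val := by
      intro r
      have hr := r.isLt
      by_cases r0 : r.val = 0
      · simp [arT, t0, tn, r0]
      by_cases rn : r.val = N + 1
      · have : ((N : ℝ) + 1) * (t.val * π / (N + 1)) = t.val * π := by field_simp
        simp [arT, t0, tn, rn, this, Real.sin_nat_mul_pi]
      · simp [arT, t0, tn, r0, rn, dstIent]
        left; congr 1; ring
    simp only [hg]
    rw [if_neg (by omega)]
    have hx : (t.val : ℝ) * π / (((N + 2 : ℕ) : ℝ) - 1) = t.val * π / (N + 1) := by
      push_cast; congr 1; ring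
    rw [hx]
    have hpi : ((N : ℝ) + 1) * (t.val * π / (N + 1)) = t.val * π := by field_simp
    apply ar_eig N q hq h hsupp (fun c : ℤ => Real.sqrt (2 / ((N : ℝ) + 1)) *
          Real.sin (c * (t.val * π / (N + 1)))) (t.val * π / (N + 1))
    · intro c; push_cast; simp [neg_mul, Real.sin_neg]
    · intro c; push_cast
      rw [add_mul, sub_mul, hpi, Real.sin_add, Real.sin_sub, Real.sin_nat_mul_pi]; ring
    · intro s k; push_cast
      rw [add_mul, sub_mul, Real.sin_add, Real.sin_sub]; ring
    · right; simp
    · right; push_cast; rw [hpi, Real.sin_nat_mul_pi]; simp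

/-- Diagonalization of the 1D anti-reflective matrix: `T̃_m AR_m(h) T_m = D` with
`D_{1,1} = D_{m,m} = f(0)` and `D_{s,s} = f((s−1)π/(m−1))` for `s = 2,…,m−1`;
in particular the columns of `T_m` are eigenvectors of `AR_m(h)` with those
eigenvalues. -/
theorem arMat_diagonalization (m q : ℕ) (hm : 3 ≤ m) (hq : q ≤ m - 3)
    (h : ℕ → ℝ) (hsupp : ∀ k, q < k → h k = 0) :
    arTtil m * arMat h q m * arT m =
      Matrix.diagonal (fun s : Fin m =>
        if s.val = m - 1 then genFun h q 0
        else genFun h q ((s.val : ℝ) * Real.pi / ((m : ℝ) - 1))) ∧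
    arMat h q m * arT m =
      arT m *
        Matrix.diagonal (fun s : Fin m =>
          if s.val = m - 1 then genFun h q 0
          else genFun h q ((s.val : ℝ) * Real.pi / ((m : ℝ) - 1))) := by
  obtain ⟨N, rfl⟩ : ∃ N, m = N + 2 := ⟨m - 2, by omega⟩
  have hc := ar_comm N q (by omega) h hsupp
  refine ⟨?_, hc⟩
  rw [Matrix.mul_assoc, hc, ← Matrix.mul_assoc, ar_inv, Matrix.one_mul]
end

section
/- For every integer m ≥ 3 and every vector f ∈ ℝ^m, ‖T̃_m f‖₂ ≤ (1 + 2‖p‖₂) ‖f‖₂; consequently the spectral norm of T̃_m satisfies ‖T̃_m‖₂ ≤ 1 + 2‖p‖₂, where p ∈ ℝ^{m−2} has entries p_j = 1 − j/(m−1). -/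
open Real Matrix

/-- The Euclidean norm `‖f‖₂ = √(∑ i, f_i²)` of a vector `f ∈ ℝ^m`. -/
noncomputable def l2norm {m : ℕ} (f : Fin m → ℝ) : ℝ :=
  Real.sqrt (∑ i, (f i) ^ 2)

lemma cos_sum_aux (θ : ℝ) (N : ℕ) :
    2 * Real.sin (θ / 2) * ∑ k ∈ Finset.range N, Real.cos (k * θ)
      = Real.sin ((N : ℝ) * θ - θ / 2) + Real.sin (θ / 2) := by
  induction N with
  | zero => simp [Real.sin_neg]
  | succ k ih =>
    rw [Finset.sum_range_succ, mul_add, ih]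
    have e : ((k + 1 : ℕ) : ℝ) * θ - θ / 2 = k * θ + θ / 2 := by push_cast; ring
    rw [e, Real.sin_add, Real.sin_sub]
    ring

lemma cos_sum_eval (N : ℕ) (l : ℕ) (h0 : 0 < l) (h2 : l < 2 * N) :
    ∑ k ∈ Finset.range N, Real.cos (k * ((l : ℝ) * Real.pi / N)) = (1 - (-1) ^ l) / 2 := by
  have hN : (0 : ℝ) < N := by
    have : 0 < N := by omega
    exact_mod_cast this
  have hl : (0 : ℝ) < l := by exact_mod_cast h0
  have hl2 : (l : ℝ) < 2 * N := by exact_mod_cast h2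
  set θ : ℝ := (l : ℝ) * Real.pi / N with hθ
  have hs : 0 < Real.sin (θ / 2) := by
    apply Real.sin_pos_of_pos_of_lt_pi
    · positivity
    · rw [hθ, div_div, div_lt_iff₀ (by positivity)]
      nlinarith [Real.pi_pos]
  have h := cos_sum_aux θ N
  have e : (N : ℝ) * θ = l * Real.pi := by rw [hθ]; field_simp
  rw [e, Real.sin_sub, Real.sin_nat_mul_pi, Real.cos_nat_mul_pi] at h
  have h3 : Real.sin (θ / 2) * (∑ k ∈ Finset.range N, Real.cos (k * θ) - (1 - (-1) ^ l) / 2) = 0 := by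
    linear_combination h / 2
  rcases mul_eq_zero.1 h3 with h4 | h4
  · exact absurd h4 hs.ne'
  · linarith

lemma sin_sin_sum_lt (N a b : ℕ) (hb : b < a) (ha : a < N) :
    ∑ k ∈ Finset.range N, Real.sin (k * (a * Real.pi / N)) * Real.sin (k * (b * Real.pi / N)) = 0 := by
  have h1 := cos_sum_eval N (a - b) (by omega) (by omega)
  have h2 := cos_sum_eval N (a + b) (by omega) (by omega)
  have hp : ((-1 : ℝ)) ^ (a + b) = (-1) ^ (a - b) := by
    have : a + b = (a - b) + 2 * b := by omega
    rw [this, pow_add, pow_mul]; simp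
  rw [hp] at h2
  have : ∀ k ∈ Finset.range N, Real.sin (k * (a * Real.pi / N)) * Real.sin (k * (b * Real.pi / N))
      = Real.cos (k * (((a - b : ℕ) : ℝ) * Real.pi / N)) / 2
        - Real.cos (k * (((a + b : ℕ) : ℝ) * Real.pi / N)) / 2 := by
    intro k _
    have e1 : (k : ℝ) * (((a - b : ℕ) : ℝ) * Real.pi / N)
        = k * (a * Real.pi / N) - k * (b * Real.pi / N) := by
      rw [Nat.cast_sub hb.le]; ring
    have e2 : (k : ℝ) * (((a + b : ℕ) : ℝ) * Real.pi / N)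
        = k * (a * Real.pi / N) + k * (b * Real.pi / N) := by
      push_cast; ring
    rw [e1, e2, Real.cos_add, Real.cos_sub]; ring
  rw [Finset.sum_congr rfl this, Finset.sum_sub_distrib, ← Finset.sum_div, ← Finset.sum_div, h1, h2]
  ring

lemma sin_sin_sum_eq (N a : ℕ) (h0 : 0 < a) (ha : a < N) :
    ∑ k ∈ Finset.range N, Real.sin (k * (a * Real.pi / N)) * Real.sin (k * (a * Real.pi / N))
      = N / 2 := by
  have h2 := cos_sum_eval N (2 * a) (by omega) (by omega)
  have : ∀ k ∈ Finset.range N, Real.sin (k * (a * Real.pi / N)) * Real.sin (k * (a * Real.pi / N))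
      = 1 / 2 - Real.cos (k * (((2 * a : ℕ) : ℝ) * Real.pi / N)) / 2 := by
    intro k _
    have e2 : (k : ℝ) * (((2 * a : ℕ) : ℝ) * Real.pi / N)
        = 2 * (k * (a * Real.pi / N)) := by
      push_cast; ring
    rw [e2, Real.cos_two_mul, Real.cos_sq']; ring
  rw [Finset.sum_congr rfl this, Finset.sum_sub_distrib, ← Finset.sum_div, ← Finset.sum_div, h2]
  simp [pow_mul]

noncomputable def Qm (n : ℕ) : Matrix (Fin n) (Fin n) ℝ :=
  fun i j => dstIent n (i.val + 1) (j.val + 1)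

lemma Qm_orth (n : ℕ) : (Qm n)ᵀ * Qm n = 1 := by
  have hn : (0 : ℝ) < (n : ℝ) + 1 := by positivity
  have key : ∀ i j : Fin n, ((Qm n)ᵀ * Qm n) i j = (2 / ((n : ℝ) + 1)) *
      ∑ k ∈ Finset.range (n + 1), Real.sin (k * (((i.val + 1 : ℕ) : ℝ) * Real.pi / ((n + 1 : ℕ) : ℝ)))
        * Real.sin (k * (((j.val + 1 : ℕ) : ℝ) * Real.pi / ((n + 1 : ℕ) : ℝ))) := by
    intro i j
    rw [Finset.sum_range_succ', Matrix.mul_apply]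
    simp only [Nat.cast_zero, zero_mul, Real.sin_zero, add_zero]
    rw [← Fin.sum_univ_eq_sum_range (fun k => Real.sin (((k + 1 : ℕ) : ℝ) * (((i.val + 1 : ℕ) : ℝ) * Real.pi / ((n + 1 : ℕ) : ℝ)))
        * Real.sin (((k + 1 : ℕ) : ℝ) * (((j.val + 1 : ℕ) : ℝ) * Real.pi / ((n + 1 : ℕ) : ℝ)))), Finset.mul_sum]
    refine Finset.sum_congr rfl fun k _ => ?_
    simp only [Matrix.transpose_apply, Qm, dstIent]
    have hsq := Real.mul_self_sqrt (show 0 ≤ 2 / ((n : ℝ) + 1) by positivity)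
    have e : ∀ c : ℕ, ((k.val + 1 : ℕ) : ℝ) * ((c : ℝ) * Real.pi / ((n + 1 : ℕ) : ℝ))
        = ((k.val + 1 : ℕ) : ℝ) * (c : ℝ) * Real.pi / ((n : ℝ) + 1) := by
      intro c
      push_cast
      ring
    rw [e, e, mul_mul_mul_comm, hsq]
  ext i j
  rw [key]
  rcases lt_trichotomy i.val j.val with h | h | h
  · have := sin_sin_sum_lt (n + 1) (j.val + 1) (i.val + 1) (by omega) (by omega)
    rw [Finset.sum_congr rfl (fun k _ => mul_comm _ _), this, Matrix.one_apply_ne (by rintro rfl; omega)]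
    simp
  · have := sin_sin_sum_eq (n + 1) (j.val + 1) (by omega) (by omega)
    have hij : i = j := Fin.ext h
    subst hij
    rw [this, Matrix.one_apply_eq]
    push_cast
    field_simp
  · have := sin_sin_sum_lt (n + 1) (i.val + 1) (j.val + 1) (by omega) (by omega)
    rw [this, Matrix.one_apply_ne (by rintro rfl; omega)]
    simp

lemma Qm_norm (n : ℕ) (x : Fin n → ℝ) : ∑ i, ((Qm n).mulVec x i) ^ 2 = ∑ i, x i ^ 2 := by
  have h : (Qm n).mulVec x ⬝ᵥ (Qm n).mulVec x = x ⬝ᵥ x := by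
    rw [Matrix.dotProduct_mulVec, Matrix.vecMul_mulVec, Qm_orth, Matrix.vecMul_one]
  simpa [dotProduct, sq] using h

lemma sum_Icc_fin (n : ℕ) (g : ℕ → ℝ) :
    ∑ j ∈ Finset.Icc 1 n, g j = ∑ i : Fin n, g (i.val + 1) := by
  rw [Fin.sum_univ_eq_sum_range (fun i => g (i + 1)), Finset.range_eq_Ico,
    Finset.sum_Ico_add' g 0 n 1]
  rfl

lemma sum_fin_split (n : ℕ) (g : Fin (n + 2) → ℝ) :
    ∑ i, g i = g 0 + ∑ i : Fin n, g i.castSucc.succ + g (Fin.last (n + 1)) := by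
  rw [Fin.sum_univ_succ, Fin.sum_univ_castSucc, Fin.succ_last]; ring

lemma final_ineq (n : ℕ) (g p q : Fin n → ℝ) (a b P : ℝ) (hP : 0 ≤ P)
    (hp : ∑ i, p i ^ 2 = P ^ 2) (hq : ∑ i, q i ^ 2 = P ^ 2) :
    (1 + P ^ 2) * a ^ 2 + ∑ i, (g i - a * p i - b * q i) ^ 2 + (1 + P ^ 2) * b ^ 2
      ≤ (1 + 2 * P) ^ 2 * (a ^ 2 + ∑ i, g i ^ 2 + b ^ 2) := by
  set G2 := ∑ i, g i ^ 2 with hG2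
  have hG0 : 0 ≤ G2 := Finset.sum_nonneg fun i _ => sq_nonneg _
  have hex : ∑ i, (g i - a * p i - b * q i) ^ 2
      = G2 + a ^ 2 * P ^ 2 + b ^ 2 * P ^ 2 - 2 * a * (∑ i, g i * p i)
        - 2 * b * (∑ i, g i * q i) + 2 * a * b * ∑ i, p i * q i := by
    rw [← hp, hG2]
    nth_rw 2 [hp]
    rw [← hq]
    simp only [Finset.mul_sum, ← Finset.sum_add_distrib, ← Finset.sum_sub_distrib]
    refine Finset.sum_congr rfl fun i _ => by ring
  have c1 := Finset.sum_mul_sq_le_sq_mul_sq Finset.univ g p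
  have c2 := Finset.sum_mul_sq_le_sq_mul_sq Finset.univ g q
  have c3 := Finset.sum_mul_sq_le_sq_mul_sq Finset.univ p q
  rw [hp] at c1; rw [hq] at c2; rw [hp, hq] at c3
  rw [← hG2] at c1 c2
  set G := Real.sqrt G2 with hG
  have hGG : G ^ 2 = G2 := Real.sq_sqrt hG0
  have hGn : 0 ≤ G := Real.sqrt_nonneg _
  rw [← hGG, ← mul_pow] at c1 c2
  rw [← mul_pow] at c3
  have d1 := abs_le_of_sq_le_sq c1 (by positivity)
  have d2 := abs_le_of_sq_le_sq c2 (by positivity)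
  have d3 := abs_le_of_sq_le_sq c3 (by positivity)
  have e1 : -(2 * a * (∑ i, g i * p i)) ≤ 2 * |a| * (G * P) := by
    calc _ ≤ |2 * a * (∑ i, g i * p i)| := neg_le_abs _
      _ = 2 * |a| * |∑ i, g i * p i| := by rw [abs_mul, abs_mul]; norm_num
      _ ≤ _ := by gcongr
  have e2 : -(2 * b * (∑ i, g i * q i)) ≤ 2 * |b| * (G * P) := by
    calc _ ≤ |2 * b * (∑ i, g i * q i)| := neg_le_abs _
      _ = 2 * |b| * |∑ i, g i * q i| := by rw [abs_mul, abs_mul]; norm_num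
      _ ≤ _ := by gcongr
  have e3 : 2 * a * b * (∑ i, p i * q i) ≤ 2 * |a| * |b| * (P * P) := by
    calc _ ≤ |2 * a * b * (∑ i, p i * q i)| := le_abs_self _
      _ = 2 * |a| * |b| * |∑ i, p i * q i| := by rw [abs_mul, abs_mul, abs_mul]; norm_num
      _ ≤ _ := by gcongr
  have e4 : 2 * |a| * |b| * (P * P) ≤ P ^ 2 * (a ^ 2 + b ^ 2) := by
    rw [← sq_abs a, ← sq_abs b]
    nlinarith [mul_nonneg (sq_nonneg P) (sq_nonneg (|a| - |b|))]
  have e5 : 2 * |a| * (G * P) ≤ P * (a ^ 2 + G ^ 2) := by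
    rw [← sq_abs a]
    nlinarith [mul_nonneg hP (sq_nonneg (|a| - G))]
  have e6 : 2 * |b| * (G * P) ≤ P * (b ^ 2 + G ^ 2) := by
    rw [← sq_abs b]
    nlinarith [mul_nonneg hP (sq_nonneg (|b| - G))]
  rw [hex, ← hGG]
  nlinarith [mul_nonneg hP (sq_nonneg a), mul_nonneg hP (sq_nonneg b), mul_nonneg hP (sq_nonneg G),
    sq_nonneg (P * a), sq_nonneg (P * b), sq_nonneg (P * G)]

/-- For every `m ≥ 3` and every `f ∈ ℝ^m`, `‖T̃_m f‖₂ ≤ (1 + 2‖p‖₂)‖f‖₂`;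
consequently the spectral norm of `T̃_m` is at most `1 + 2‖p‖₂`. -/
theorem arTtil_norm_bound (m : ℕ) (hm : 3 ≤ m) (f : Fin m → ℝ) :
    l2norm ((arTtil m).mulVec f) ≤
      (1 + 2 * Real.sqrt (∑ j ∈ Finset.Icc 1 (m - 2), (pv m j) ^ 2)) * l2norm f := by
  obtain ⟨n, rfl⟩ : ∃ n, m = n + 2 := ⟨m - 2, by omega⟩
  have hs : n + 2 - 2 = n := by omega
  have hs1 : n + 2 - 1 = n + 1 := by omega
  set P := Real.sqrt (∑ j ∈ Finset.Icc 1 (n + 2 - 2), (pv (n + 2) j) ^ 2) with hPdef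
  have hP : 0 ≤ P := Real.sqrt_nonneg _
  have hP2 : ∑ j ∈ Finset.Icc 1 (n + 2 - 2), (pv (n + 2) j) ^ 2 = P ^ 2 :=
    (Real.sq_sqrt (Finset.sum_nonneg fun i _ => sq_nonneg _)).symm
  have hα : alphaAR (n + 2) ^ 2 = 1 + P ^ 2 := by
    rw [alphaAR, hP2, Real.sq_sqrt (by positivity)]
  set p : Fin n → ℝ := fun i => pv (n + 2) (i.val + 1) with hpdef
  set q : Fin n → ℝ := fun i => pv (n + 2) (n + 1 - (i.val + 1)) with hqdef
  have hp : ∑ i, p i ^ 2 = P ^ 2 := by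
    rw [← hP2, hs, sum_Icc_fin n (fun j => pv (n + 2) j ^ 2)]
  have hq : ∑ i, q i ^ 2 = P ^ 2 := by
    rw [← hp, ← Equiv.sum_comp Fin.revPerm]
    refine Finset.sum_congr rfl fun i _ => ?_
    simp only [hpdef, hqdef, Fin.revPerm_apply, Fin.val_rev]
    congr 2
    omega
  set g : Fin n → ℝ := fun i => f i.castSucc.succ with hg
  have r0 : (arTtil (n + 2)).mulVec f 0 = alphaAR (n + 2) * f 0 := by
    rw [Matrix.mulVec, dotProduct, sum_fin_split]
    have : ∀ i : Fin n, i.val ≠ n := fun i => i.isLt.ne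
    simp [arTtil, this]
  have rl : (arTtil (n + 2)).mulVec f (Fin.last (n + 1)) = alphaAR (n + 2) * f (Fin.last (n + 1)) := by
    rw [Matrix.mulVec, dotProduct, sum_fin_split]
    have : ∀ i : Fin n, i.val ≠ n := fun i => i.isLt.ne
    simp [arTtil, this]
  have ri : ∀ i : Fin n, (arTtil (n + 2)).mulVec f i.castSucc.succ
      = (Qm n).mulVec (fun j => g j - f 0 * p j - f (Fin.last (n + 1)) * q j) i := by
    intro i
    rw [Matrix.mulVec, dotProduct, sum_fin_split]
    have : ∀ i : Fin n, i.val ≠ n := fun i => i.isLt.ne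
    simp only [arTtil, hs, hs1, sum_Icc_fin]
    simp [this, Matrix.mulVec, dotProduct, Qm, mul_sub, Finset.sum_sub_distrib]
    simp only [hpdef, hqdef, hg, Finset.sum_mul]
    have e1 : ∀ x : Fin n, dstIent n (i.val + 1) (x.val + 1) * (f 0 * pv (n + 2) (x.val + 1))
      = dstIent n (i.val + 1) (x.val + 1) * pv (n + 2) (x.val + 1) * f 0 := fun x => by ring
    have e2 : ∀ x : Fin n, dstIent n (i.val + 1) (x.val + 1) * (f (Fin.last (n + 1)) * pv (n + 2) (n + 1 - (x.val + 1)))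
      = dstIent n (i.val + 1) (x.val + 1) * pv (n + 2) (n + 1 - (x.val + 1)) * f (Fin.last (n + 1)) := fun x => by ring
    simp only [e1, e2]
    simp
    ring
  have hmain := final_ineq n g p q (f 0) (f (Fin.last (n + 1))) P hP hp hq
  rw [← Qm_norm] at hmain
  have hL : ∑ i, ((arTtil (n + 2)).mulVec f i) ^ 2 ≤ (1 + 2 * P) ^ 2 * ∑ i, f i ^ 2 := by
    rw [sum_fin_split, sum_fin_split n (fun i => f i ^ 2), r0, rl]
    simp only [ri, mul_pow, hα]
    exact hmain
  unfold l2norm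
  calc _ ≤ Real.sqrt ((1 + 2 * P) ^ 2 * ∑ i, f i ^ 2) := Real.sqrt_le_sqrt hL
    _ = _ := by rw [Real.sqrt_mul (sq_nonneg _), Real.sqrt_sq (by positivity)]
end

section
/- (Re-blurring as Tikhonov regularization in a transformed space.) Let T ∈ ℝ^{N×N} be invertible, let Λ_A and Λ_D be real diagonal N×N matrices, set A = T Λ_A T^{−1} and D = T Λ_D T^{−1}, let μ > 0 and g ∈ ℝ^N. Then a vector f ∈ ℝ^N satisfies the re-blurring equation (A² + μ D²) f = A g if and only if f is a global minimizer of the functional F(x) = ‖T^{−1}(A x − g)‖₂² + μ ‖T^{−1} D x‖₂² over x ∈ ℝ^N. -/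
open Matrix

/-- Re-blurring as Tikhonov regularization in a transformed space: if
`A = T Λ_A T⁻¹` and `D = T Λ_D T⁻¹` with `T` invertible and `Λ_A, Λ_D` real
diagonal, and `μ > 0`, then `f` satisfies the re-blurring equation
`(A² + μD²) f = A g` if and only if `f` is a global minimizer of
`F(x) = ‖T⁻¹(Ax − g)‖₂² + μ‖T⁻¹Dx‖₂²`. -/
theorem reblurring_is_transformed_tikhonov (N : ℕ)
    (T : Matrix (Fin N) (Fin N) ℝ) (ΛA ΛD : Fin N → ℝ) (μ : ℝ) (g : Fin N → ℝ)
    (hT : IsUnit T.det) (hμ : 0 < μ)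
    (A D : Matrix (Fin N) (Fin N) ℝ)
    (hA : A = T * Matrix.diagonal ΛA * T⁻¹) (hD : D = T * Matrix.diagonal ΛD * T⁻¹) :
    ∀ f : Fin N → ℝ,
      (A * A + μ • (D * D)).mulVec f = A.mulVec g ↔
        ∀ x : Fin N → ℝ,
          (∑ i, ((T⁻¹).mulVec (A.mulVec f - g) i) ^ 2 +
              μ * ∑ i, ((T⁻¹).mulVec (D.mulVec f) i) ^ 2) ≤
            (∑ i, ((T⁻¹).mulVec (A.mulVec x - g) i) ^ 2 +
              μ * ∑ i, ((T⁻¹).mulVec (D.mulVec x) i) ^ 2) := by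
  intro f
  have hTT : T⁻¹ * T = 1 := Matrix.nonsing_inv_mul T hT
  have hTT' : T * T⁻¹ = 1 := Matrix.mul_nonsing_inv T hT
  have key : ∀ (L : Fin N → ℝ) (x : Fin N → ℝ),
      (T⁻¹).mulVec ((T * Matrix.diagonal L * T⁻¹).mulVec x)
        = (Matrix.diagonal L).mulVec ((T⁻¹).mulVec x) := by
    intro L x
    rw [Matrix.mulVec_mulVec, Matrix.mulVec_mulVec, Matrix.mul_assoc T, ← Matrix.mul_assoc T⁻¹, hTT,
      Matrix.one_mul]
  have keyA : ∀ x i, (T⁻¹).mulVec (A.mulVec x) i = ΛA i * (T⁻¹).mulVec x i := by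
    intro x i
    rw [hA, key, Matrix.mulVec_diagonal]
  have keyD : ∀ x i, (T⁻¹).mulVec (D.mulVec x) i = ΛD i * (T⁻¹).mulVec x i := by
    intro x i
    rw [hD, key, Matrix.mulVec_diagonal]
  have inj : ∀ u v : Fin N → ℝ, (T⁻¹).mulVec u = (T⁻¹).mulVec v → u = v := by
    intro u v h
    have := congrArg T.mulVec h
    simpa [Matrix.mulVec_mulVec, hTT'] using this
  have heq : (A * A + μ • (D * D)).mulVec f = A.mulVec g ↔
      ∀ i, (ΛA i ^ 2 + μ * ΛD i ^ 2) * (T⁻¹).mulVec f i = ΛA i * (T⁻¹).mulVec g i := by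
    have h1 : ∀ i, (T⁻¹).mulVec ((A * A + μ • (D * D)).mulVec f) i
        = (ΛA i ^ 2 + μ * ΛD i ^ 2) * (T⁻¹).mulVec f i := by
      intro i
      rw [Matrix.add_mulVec, Matrix.smul_mulVec, ← Matrix.mulVec_mulVec, ← Matrix.mulVec_mulVec,
        Matrix.mulVec_add, Matrix.mulVec_smul, Pi.add_apply, Pi.smul_apply, keyA, keyA, keyD, keyD,
        smul_eq_mul]
      ring
    constructor
    · intro h i
      rw [← h1, h, keyA]
    · intro h
      apply inj
      funext i
      rw [h1, h, keyA]
  have hF : ∀ x : Fin N → ℝ, (∑ i, ((T⁻¹).mulVec (A.mulVec x - g) i) ^ 2 +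
      μ * ∑ i, ((T⁻¹).mulVec (D.mulVec x) i) ^ 2)
      = ∑ i, ((ΛA i * (T⁻¹).mulVec x i - (T⁻¹).mulVec g i) ^ 2
          + μ * (ΛD i * (T⁻¹).mulVec x i) ^ 2) := by
    intro x
    rw [Finset.mul_sum, ← Finset.sum_add_distrib]
    refine Finset.sum_congr rfl fun i _ => ?_
    rw [Matrix.mulVec_sub, Pi.sub_apply, keyA, keyD]
  rw [heq]
  simp only [hF]
  generalize (T⁻¹).mulVec g = h
  constructor
  · intro hE x
    refine Finset.sum_le_sum fun i _ => ?_
    have hi := hE i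
    generalize (T⁻¹).mulVec f i = u at *
    generalize (T⁻¹).mulVec x i = v at *
    have hc : 0 ≤ (ΛA i ^ 2 + μ * ΛD i ^ 2) * (v - u) ^ 2 := by positivity
    linear_combination hc - 2 * (v - u) * hi
  · intro hmin i
    by_contra hne
    set y := (T⁻¹).mulVec f with hy
    set c := ΛA i ^ 2 + μ * ΛD i ^ 2 with hc
    have hc0 : 0 < c := by
      rcases (show 0 ≤ c by positivity).lt_or_eq with h0 | h0
      · exact h0
      · exfalso
        apply hne
        have : ΛA i = 0 := by
          have h2 : 0 ≤ μ * ΛD i ^ 2 := by positivity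
          have h3 : ΛA i ^ 2 ≤ 0 := by linarith
          exact pow_eq_zero_iff (two_ne_zero) |>.1 (le_antisymm h3 (sq_nonneg _))
        rw [← h0, this]
        ring
    set r := ΛA i * h i - c * y i with hr
    have hr0 : r ≠ 0 := fun h0 => hne (by linarith)
    have hm := hmin (T.mulVec (Function.update y i (y i + r / c)))
    rw [Matrix.mulVec_mulVec, hTT, Matrix.one_mulVec, ← Finset.add_sum_erase _ _ (Finset.mem_univ i),
      ← Finset.add_sum_erase _ _ (Finset.mem_univ i)] at hm
    have hrest : ∀ j ∈ Finset.univ.erase i,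
        (ΛA j * Function.update y i (y i + r / c) j - h j) ^ 2
          + μ * (ΛD j * Function.update y i (y i + r / c) j) ^ 2
        = (ΛA j * y j - h j) ^ 2 + μ * (ΛD j * y j) ^ 2 := by
      intro j hj
      rw [Function.update_of_ne (Finset.ne_of_mem_erase hj)]
    rw [Finset.sum_congr rfl hrest, Function.update_self] at hm
    have hm' := le_of_add_le_add_right hm
    have ht : c * (r / c) = r := by field_simp
    have hpos : 0 < c * (r / c) ^ 2 := by positivity
    generalize r / c = t at *
    have e : (ΛA i * (y i + t) - h i) ^ 2 + μ * (ΛD i * (y i + t)) ^ 2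
        = (ΛA i * y i - h i) ^ 2 + μ * (ΛD i * y i) ^ 2 - c * t ^ 2 := by
      have e1 : c * t = ΛA i * h i - c * y i := ht
      rw [hc] at e1 ⊢
      linear_combination 2 * t * e1
    linarith
end
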